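/- Let (G,·,∘) be a two-sided brace. Then the adjoint action of the group (G,∘), Ad∘ : G → Aut(G) given by Ad∘_a(b) = a ∘ b ∘ ā (with ā the inverse of a in (G,∘)), is a semi-trivial action of the brace (G,·,∘) on itself; in particular each Ad∘_a is an automorphism of the abelian group (G,·): Ad∘_a(b · c) = Ad∘_a(b) · Ad∘_a(c) for all a,b,c ∈ G. -/

import Mathlib

structure IsGroup {G : Type*} (op : G → G → G) (e : G) (inv : G → G) : Prop where
  assoc : ∀ a b c, op (op a b) c = op a (op b c)
  one_op : ∀ a, op e a = a
  op_one : ∀ a, op a e = a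
  inv_op : ∀ a, op (inv a) a = e
  op_inv : ∀ a, op a (inv a) = e

/-- A brace: an abelian group `(G, mul)` and a group `(G, circ)` with the compatibility
`a ∘ (b · c) = (a ∘ b) · a⁻¹ · (a ∘ c)`. -/
structure IsBrace {G : Type*} (mul : G → G → G) (e : G) (inv : G → G)
    (circ : G → G → G) (ce : G) (cinv : G → G) : Prop where
  mul_group : IsGroup mul e inv
  mul_comm : ∀ a b, mul a b = mul b a
  circ_group : IsGroup circ ce cinv
  compat : ∀ a b c, circ a (mul b c) = mul (mul (circ a b) (inv a)) (circ a c)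

/-- A homomorphism of braces preserves both operations. -/
def IsBraceHom {G H : Type*} (mulG circG : G → G → G) (mulH circH : H → H → H)
    (f : G → H) : Prop :=
  (∀ a b, f (mulG a b) = mulH (f a) (f b)) ∧ (∀ a b, f (circG a b) = circH (f a) (f b))

/-- A brace automorphism: a bijective self-homomorphism. -/
def IsBraceAut {H : Type*} (mulH circH : H → H → H) (f : H → H) : Prop :=
  Function.Bijective f ∧ IsBraceHom mulH circH mulH circH f

/-- A semi-trivial action of the brace `G` on the brace `H`: each `Φ a` is a brace
automorphism of `H` and `Φ (a ∘ b) = Φ a ∘ Φ b`. -/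
def IsSemiTrivialAction {G H : Type*} (circG : G → G → G)
    (mulH circH : H → H → H) (Φ : G → H → H) : Prop :=
  (∀ a, IsBraceAut mulH circH (Φ a)) ∧ (∀ a b h, Φ (circG a b) h = Φ a (Φ b h))

/-- A relative Rota-Baxter operator on the brace `G` with respect to the semi-trivial
action `Φ` of `G` on `H`. -/
def IsRelRBO {G H : Type*} (mulG circG : G → G → G) (mulH circH : H → H → H)
    (Φ : G → H → H) (B : H → G) : Prop :=
  (∀ h k, mulG (B h) (B k) = B (mulH h k)) ∧
  (∀ h k, circG (B h) (B k) = B (circH h (Φ (B h) k)))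

/-- An enhanced relative Rota-Baxter operator. -/
def IsEnhancedRelRBO {G H : Type*} (mulG circG : G → G → G) (mulH circH : H → H → H)
    (Φ : G → H → H) (B : H → G) : Prop :=
  (∀ h k, mulG (B h) (B k) = B (mulH h k)) ∧
  (∀ (a : G) (h k : H), circG (mulG (B h) a) (B k)
      = mulG (B (circH h (Φ (mulG (B h) a) k))) a)

/-- A post-group: a group `(G, circ)` with an operation `tri` such that each left
multiplication `tri a` is an automorphism of `(G, circ)` and the weighted associativity
`(a ∘ (a ⊳ b)) ⊳ c = a ⊳ (b ⊳ c)` holds. -/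
structure IsPostGroup {G : Type*} (circ : G → G → G) (ce : G) (cinv : G → G)
    (tri : G → G → G) : Prop where
  circ_group : IsGroup circ ce cinv
  tri_bij : ∀ a, Function.Bijective (tri a)
  tri_circ : ∀ a b c, tri a (circ b c) = circ (tri a b) (tri a c)
  weighted : ∀ a b c, tri (circ a (tri a b)) c = tri a (tri b c)

/-- A post-brace: a brace `(G, mul, circ)` with `tri` making `(G, circ, tri)` a post-group
and `a ⊳ (b · c) = (a ⊳ b) · (a ⊳ c)`. -/
structure IsPostBrace {G : Type*} (mul : G → G → G) (e : G) (inv : G → G)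
    (circ : G → G → G) (ce : G) (cinv : G → G) (tri : G → G → G) : Prop where
  brace : IsBrace mul e inv circ ce cinv
  post : IsPostGroup circ ce cinv tri
  tri_mul : ∀ a b c, tri a (mul b c) = mul (tri a b) (tri a c)

/-- A two-sided brace. -/
def IsTwoSidedBrace {G : Type*} (mul : G → G → G) (e : G) (inv : G → G)
    (circ : G → G → G) (ce : G) (cinv : G → G) : Prop :=
  IsBrace mul e inv circ ce cinv ∧
  ∀ a b c, circ (mul a b) c = mul (mul (circ a c) (inv c)) (circ b c)

/-- The adjoint action of the `circ`-group: `Ad∘_a(b) = a ∘ b ∘ ā`. -/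
def adC {G : Type*} (circ : G → G → G) (cinv : G → G) (a b : G) : G :=
  circ (circ a b) (cinv a)

/-- A Rota-Baxter operator on a two-sided brace (w.r.t. the adjoint semi-trivial action). -/
def IsRBTwoSided {G : Type*} (mul circ : G → G → G) (cinv : G → G) (B : G → G) : Prop :=
  (∀ a b, mul (B a) (B b) = B (mul a b)) ∧
  (∀ a b, circ (B a) (B b) = B (circ a (adC circ cinv (B a) b)))

/-- An enhanced Rota-Baxter operator on a two-sided brace. -/
def IsEnhancedRBTwoSided {G : Type*} (mul circ : G → G → G) (cinv : G → G)
    (B : G → G) : Prop :=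
  IsRBTwoSided mul circ cinv B ∧
  ∀ a b x, circ (mul (B a) x) (B b)
      = mul (B (circ a (adC circ cinv (mul (B a) x) b))) x

/-- `R × Id` on `X × X × X`. -/
def YB12 {X : Type*} (R : X × X → X × X) : X × X × X → X × X × X :=
  fun p => ((R (p.1, p.2.1)).1, (R (p.1, p.2.1)).2, p.2.2)

/-- `Id × R` on `X × X × X`. -/
def YB23 {X : Type*} (R : X × X → X × X) : X × X × X → X × X × X :=
  fun p => (p.1, R p.2)

/-- A set-theoretical solution of the Yang-Baxter equation. -/
def IsYBSolution {X : Type*} (R : X × X → X × X) : Prop :=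
  Function.Bijective R ∧
  YB12 R ∘ YB23 R ∘ YB12 R = YB23 R ∘ YB12 R ∘ YB23 R

/-- Non-degeneracy of a solution `R (a, b) = (φ_a b, ψ_b a)`. -/
def IsNonDegenerate {X : Type*} (R : X × X → X × X) : Prop :=
  (∀ a, Function.Bijective fun b => (R (a, b)).1) ∧
  (∀ b, Function.Bijective fun a => (R (a, b)).2)

/-- Involutivity of a solution: `R ∘ R = Id`. -/
def IsInvolutiveSol {X : Type*} (R : X × X → X × X) : Prop :=
  ∀ p, R (R p) = p

/-- A matched pair of groups `(G, H, σ)` with `σ (a, h) = (r a h, l a h)`. -/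
def IsMatchedPairOfGroups {G H : Type*} (opG : G → G → G) (eG : G)
    (opH : H → H → H) (eH : H) (r : G → H → H) (l : G → H → G) : Prop :=
  (∀ h, r eG h = h) ∧
  (∀ a b h, r a (r b h) = r (opG a b) h) ∧
  (∀ a b h, l (opG a b) h = opG (l a (r b h)) (l b h)) ∧
  (∀ a, l a eH = a) ∧
  (∀ a h k, l (l a h) k = l a (opH h k)) ∧
  (∀ a h k, r a (opH h k) = opH (r a h) (r (l a h) k))

/-- A left ideal of the brace with multiplication `op` (with unit `u`) and second
operation `cop`: a subgroup of the `op`-group such that `p⁻¹ op (p cop x) ∈ S`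
(expressed via the unique solution `r` of `op p r = cop p x`). -/
def IsLeftIdealOf {P : Type*} (op : P → P → P) (u : P) (cop : P → P → P)
    (S : Set P) : Prop :=
  u ∈ S ∧ (∀ p ∈ S, ∀ q ∈ S, op p q ∈ S) ∧
  (∀ p ∈ S, ∃ q ∈ S, op p q = u ∧ op q p = u) ∧
  (∀ p : P, ∀ x ∈ S, ∀ r, op p r = cop p x → r ∈ S)

/-- `I` is an ideal of the sub-brace `S` of the ambient brace: a subgroup of `(S, mul)`,
normal in `(S, mul)` and in `(S, circ)`, and a left ideal of `S`. -/
def IsIdealOfSub {G : Type*} (mul : G → G → G) (e : G) (inv : G → G)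
    (circ : G → G → G) (cinv : G → G) (S I : Set G) : Prop :=
  I ⊆ S ∧ e ∈ I ∧
  (∀ x ∈ I, ∀ y ∈ I, mul x y ∈ I) ∧ (∀ x ∈ I, inv x ∈ I) ∧
  (∀ s ∈ S, ∀ x ∈ I, mul (mul s x) (inv s) ∈ I) ∧
  (∀ s ∈ S, ∀ x ∈ I, circ (circ s x) (cinv s) ∈ I) ∧
  (∀ s ∈ S, ∀ x ∈ I, mul (inv s) (circ s x) ∈ I)

/-!
The compatibility laws say that the translations of `(G, ∘)` preserve the heap operation
`x · y⁻¹ · z` of `(G, ·)`. Conjugation by `a` is a left translation followed by a right one, so it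
preserves this operation too; since the identities of the two groups coincide, it also fixes the
identity of `(G, ·)`, and a heap homomorphism fixing the identity is a group homomorphism.
-/

section HeapHom

variable {G H K : Type*} [Group G] [Group H] [Group K]

/-- A heap homomorphism between groups: a map preserving the ternary operation `x * y⁻¹ * z`.
These are the maps that become group homomorphisms after translating the image of `1` to `1`. -/
def IsHeapHom (f : G → H) : Prop :=
  ∀ x y z, f (x * y⁻¹ * z) = f x * (f y)⁻¹ * f z

namespace IsHeapHom

theorem of_map_mul {f : G → H} {c : H} (hf : ∀ x y, f (x * y) = f x * c⁻¹ * f y) :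
    IsHeapHom f := by
  intro x y z
  have map_mul_inv : f (x * y⁻¹) = f x * (f y)⁻¹ * c := by
    have hx : f x = f (x * y⁻¹) * c⁻¹ * f y := by rw [← hf, inv_mul_cancel_right]
    rw [hx]
    group
  rw [hf, map_mul_inv, mul_inv_cancel_right]

theorem comp {g : H → K} {f : G → H} (hg : IsHeapHom g) (hf : IsHeapHom f) :
    IsHeapHom (g ∘ f) := fun x y z => by
  simp only [Function.comp_apply, hf x y z, hg (f x) (f y) (f z)]

theorem map_mul_of_map_one {f : G → H} (hf : IsHeapHom f) (h1 : f 1 = 1) (x y : G) :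
    f (x * y) = f x * f y := by
  simpa only [inv_one, mul_one, h1] using hf x 1 y

end IsHeapHom

end HeapHom

namespace IsGroup

variable {G : Type*} {op : G → G → G} {e : G} {inv : G → G}

/-- The bundled `Group` structure with the given operations, through which Mathlib's group theory
applies to unbundled operations. -/
abbrev toGroup (h : IsGroup op e inv) : Group G where
  mul := op
  one := e
  inv := inv
  mul_assoc := h.assoc
  one_mul := h.one_op
  mul_one := h.op_one
  inv_mul_cancel := h.inv_op

theorem adC_eq_conj (h : IsGroup op e inv) (a : G) :
    letI := h.toGroup
    adC op inv a = MulAut.conj a :=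
  rfl

theorem adC_bijective (h : IsGroup op e inv) (a : G) : Function.Bijective (adC op inv a) :=
  letI := h.toGroup
  h.adC_eq_conj a ▸ (MulAut.conj a).bijective

theorem adC_op_right (h : IsGroup op e inv) (a b c : G) :
    adC op inv a (op b c) = op (adC op inv a b) (adC op inv a c) :=
  letI := h.toGroup
  map_mul (MulAut.conj a) b c

theorem adC_op_left (h : IsGroup op e inv) (a b x : G) :
    adC op inv (op a b) x = adC op inv a (adC op inv b x) :=
  letI := h.toGroup
  DFunLike.congr_fun (map_mul MulAut.conj a b) x

theorem adC_id (h : IsGroup op e inv) (a : G) : adC op inv a e = e :=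
  letI := h.toGroup
  map_one (MulAut.conj a)

end IsGroup

/-- A skew brace: a brace whose group `(G, mul)` need not be abelian. -/
structure IsSkewBrace {G : Type*} (mul : G → G → G) (e : G) (inv : G → G)
    (circ : G → G → G) (ce : G) (cinv : G → G) : Prop where
  mul_group : IsGroup mul e inv
  circ_group : IsGroup circ ce cinv
  circ_mul : ∀ a b c, circ a (mul b c) = mul (mul (circ a b) (inv a)) (circ a c)

/-- A two-sided skew brace: a skew brace in which right translations of `(G, circ)` satisfy the
mirror image of the compatibility law. -/
structure IsTwoSidedSkewBrace {G : Type*} (mul : G → G → G) (e : G) (inv : G → G)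
    (circ : G → G → G) (ce : G) (cinv : G → G) : Prop
    extends IsSkewBrace mul e inv circ ce cinv where
  mul_circ : ∀ a b c, circ (mul a b) c = mul (mul (circ a c) (inv c)) (circ b c)

section SkewBrace

variable {G : Type*} {mul : G → G → G} {e : G} {inv : G → G}
  {circ : G → G → G} {ce : G} {cinv : G → G}

theorem IsTwoSidedBrace.isTwoSidedSkewBrace (h : IsTwoSidedBrace mul e inv circ ce cinv) :
    IsTwoSidedSkewBrace mul e inv circ ce cinv where
  mul_group := h.1.mul_group
  circ_group := h.1.circ_group
  circ_mul := h.1.compat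
  mul_circ := h.2

namespace IsSkewBrace

theorem circ_id_eq_mul_id (h : IsSkewBrace mul e inv circ ce cinv) : ce = e := by
  have one_eq_inv : e = inv ce := by
    simpa only [h.circ_group.one_op, h.mul_group.one_op, h.mul_group.op_one]
      using h.circ_mul ce e e
  let _ := h.mul_group.toGroup
  exact inv_eq_one.mp one_eq_inv.symm

theorem isHeapHom_circ_left (h : IsSkewBrace mul e inv circ ce cinv) (a : G) :
    letI := h.mul_group.toGroup
    IsHeapHom (circ a) :=
  letI := h.mul_group.toGroup
  .of_map_mul (h.circ_mul a)

end IsSkewBrace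

namespace IsTwoSidedSkewBrace

theorem isHeapHom_circ_right (h : IsTwoSidedSkewBrace mul e inv circ ce cinv) (a : G) :
    letI := h.mul_group.toGroup
    IsHeapHom (circ · a) :=
  letI := h.mul_group.toGroup
  .of_map_mul fun x y => h.mul_circ x y a

theorem adC_mul (h : IsTwoSidedSkewBrace mul e inv circ ce cinv) (a b c : G) :
    adC circ cinv a (mul b c) = mul (adC circ cinv a b) (adC circ cinv a c) := by
  let _ := h.mul_group.toGroup
  have isHeapHom_adC : IsHeapHom (adC circ cinv a) :=
    (h.isHeapHom_circ_right (cinv a)).comp (h.isHeapHom_circ_left a)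
  have adC_id : adC circ cinv a e = e := h.circ_id_eq_mul_id ▸ h.circ_group.adC_id a
  exact isHeapHom_adC.map_mul_of_map_one adC_id b c

end IsTwoSidedSkewBrace

end SkewBrace

theorem statement14_general {G : Type*} {mul : G → G → G} {e : G} {inv : G → G}
    {circ : G → G → G} {ce : G} {cinv : G → G}
    (hG : IsTwoSidedSkewBrace mul e inv circ ce cinv) :
    IsSemiTrivialAction circ mul circ (adC circ cinv) :=
  ⟨fun a => ⟨hG.circ_group.adC_bijective a, hG.adC_mul a, hG.circ_group.adC_op_right a⟩,
    hG.circ_group.adC_op_left⟩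

/-- For a two-sided brace, the adjoint action `Ad∘_a(b) = a ∘ b ∘ ā` of
the group `(G, ∘)` is a semi-trivial action of the brace on itself; in particular each
`Ad∘_a` is an automorphism of the abelian group `(G, ·)`. -/
theorem statement14 {G : Type*} (mul : G → G → G) (e : G) (inv : G → G)
    (circ : G → G → G) (ce : G) (cinv : G → G)
    (hG : IsTwoSidedBrace mul e inv circ ce cinv) :
    IsSemiTrivialAction circ mul circ (fun a b => adC circ cinv a b) ∧
    (∀ a b c, adC circ cinv a (mul b c)
        = mul (adC circ cinv a b) (adC circ cinv a c)) := by
  have hAd := statement14_general hG.isTwoSidedSkewBrace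
  exact ⟨hAd, fun a => (hAd.1 a).2.1⟩
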